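/- arXiv:1202.6083 — 4 statements merged into one kernel-verified Lean document; each statement's English description precedes it below -/
import Mathlib

section
/- There is a constant C > 0 depending only on L such that for every θ ∈ H¹(Γ) and every partition of Γ, Σ_{i=1}^N l_i |θ(x_i)|² + Σ_{i=1}^N |θ(x_{i+1}) − θ(x_i)|² / l_i ≤ C ‖θ‖²_{H¹(Γ)}. (The left-hand side equals (Aθ_k, θ_k)_Γ where θ_k ∈ M is the piecewise constant nodal interpolant with value θ(x_i) on τ_i.) -/
open MeasureTheory

theorem aux_tele (N : ℕ) (f : Fin (N + 1) → ℝ) :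
    ∑ i : Fin N, (f i.succ - f i.castSucc) = f (Fin.last N) - f 0 := by
  have h1 := Fin.sum_univ_succ f
  have h2 := Fin.sum_univ_castSucc f
  rw [Finset.sum_sub_distrib]
  linarith

theorem aux_cs (f : ℝ → ℝ) (a b : ℝ) (hab : a < b)
    (h1 : IntervalIntegrable f volume a b)
    (h2 : IntervalIntegrable (fun s => f s ^ 2) volume a b) :
    (∫ s in a..b, f s) ^ 2 ≤ (b - a) * ∫ s in a..b, f s ^ 2 := by
  have hba : 0 < b - a := sub_pos.2 hab
  set I := ∫ s in a..b, f s with hI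
  set m := I / (b - a) with hm
  have key : 0 ≤ ∫ s in a..b, (f s ^ 2 - (2 * m) * f s + m ^ 2) := by
    apply intervalIntegral.integral_nonneg hab.le
    intro u _
    nlinarith [sq_nonneg (f u - m)]
  rw [intervalIntegral.integral_add (h2.sub (h1.const_mul _)) (by simp),
    intervalIntegral.integral_sub h2 (h1.const_mul _),
    intervalIntegral.integral_const_mul, intervalIntegral.integral_const, ← hI] at key
  have hmI : I = m * (b - a) := by rw [hm]; field_simp
  simp only [smul_eq_mul] at key
  rw [hmI] at key ⊢
  nlinarith [mul_nonneg hba.le key]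

/-- There is a constant `C > 0` depending only on `L` such that for every
`θ ∈ H¹(Γ)` (an `L`-periodic locally absolutely continuous `θ : ℝ → ℂ` with derivative `θ'`,
both in `L²(0,L)`) and every partition `0 = x₁ < ⋯ < x_{N+1} = L` of `Γ`,
`∑_{i=1}^N l_i |θ(x_i)|² + ∑_{i=1}^N |θ(x_{i+1}) − θ(x_i)|² / l_i ≤ C ‖θ‖²_{H¹(Γ)}`.
(The left-hand side is `(Aθ_k, θ_k)_Γ` for the piecewise constant nodal interpolant `θ_k`.) -/
theorem stmt_8 (L : ℝ) (hL : 0 < L) :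
    ∃ C > 0, ∀ (N : ℕ), 2 ≤ N →
      ∀ (x : Fin (N + 1) → ℝ), StrictMono x → x 0 = 0 → x (Fin.last N) = L →
      ∀ (θ θ' : ℝ → ℂ), (∀ s, θ (s + L) = θ s) →
      (∀ a b : ℝ, a ≤ b → θ b = θ a + ∫ t in a..b, θ' t) →
      MemLp θ 2 (volume.restrict (Set.Ioo 0 L)) →
      MemLp θ' 2 (volume.restrict (Set.Ioo 0 L)) →
      (∑ i : Fin N, (x i.succ - x i.castSucc) * ‖θ (x i.castSucc)‖ ^ 2)
          + ∑ i : Fin N, ‖θ (x i.succ) - θ (x i.castSucc)‖ ^ 2 / (x i.succ - x i.castSucc)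
        ≤ C * ∫ s in (0:ℝ)..L, (‖θ s‖ ^ 2 + ‖θ' s‖ ^ 2) := by
  refine ⟨3 + 2 * L ^ 2, by positivity, ?_⟩
  intro N hN x hx hx0 hxL θ θ' hper hac hθ hθ'
  have hi : IntervalIntegrable (fun s => ‖θ s‖ ^ 2) volume 0 L := by
    rw [intervalIntegrable_iff_integrableOn_Ioo_of_le hL.le]
    exact hθ.integrable_norm_pow (by norm_num)
  have hi' : IntervalIntegrable (fun s => ‖θ' s‖ ^ 2) volume 0 L := by
    rw [intervalIntegrable_iff_integrableOn_Ioo_of_le hL.le]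
    exact hθ'.integrable_norm_pow (by norm_num)
  have hn : IntervalIntegrable (fun s => ‖θ' s‖) volume 0 L := by
    rw [intervalIntegrable_iff_integrableOn_Ioo_of_le hL.le]
    exact (hθ'.integrable (by norm_num)).norm
  have hsub : ∀ {a b : ℝ}, 0 ≤ a → a ≤ b → b ≤ L → Set.uIcc a b ⊆ Set.uIcc 0 L := by
    intro a b h0 h1 h2
    rw [Set.uIcc_of_le h1, Set.uIcc_of_le hL.le]
    exact Set.Icc_subset_Icc h0 h2
  have hloc : ∀ a b : ℝ, 0 ≤ a → a < b → b ≤ L →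
      ‖θ b - θ a‖ ^ 2 ≤ (b - a) * ∫ s in a..b, ‖θ' s‖ ^ 2 := by
    intro a b h0 h1 h2
    refine le_trans ?_ (aux_cs _ a b h1 (hn.mono_set (hsub h0 h1.le h2))
      (hi'.mono_set (hsub h0 h1.le h2)))
    gcongr
    rw [hac a b h1.le, add_sub_cancel_left]
    exact intervalIntegral.norm_integral_le_integral_norm h1.le
  set D := ∫ s in (0:ℝ)..L, ‖θ' s‖ ^ 2 with hD
  set E := ∫ s in (0:ℝ)..L, ‖θ s‖ ^ 2 with hE
  have hD0 : 0 ≤ D := intervalIntegral.integral_nonneg hL.le fun _ _ => by positivity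
  have hE0 : 0 ≤ E := intervalIntegral.integral_nonneg hL.le fun _ _ => by positivity
  have hglob1 : ∀ a b : ℝ, 0 ≤ a → a < b → b ≤ L → ‖θ b - θ a‖ ^ 2 ≤ L * D := by
    intro a b h0 h1 h2
    refine (hloc a b h0 h1 h2).trans ?_
    have h3 : ∫ s in a..b, ‖θ' s‖ ^ 2 ≤ D :=
      intervalIntegral.integral_mono_interval h0 h1.le h2
        (Filter.Eventually.of_forall fun _ => by positivity) hi'
    have : b - a ≤ L := by linarith
    exact mul_le_mul this h3
      (intervalIntegral.integral_nonneg h1.le fun _ _ => by positivity) hL.le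
  have hglob : ∀ a ∈ Set.Icc 0 L, ∀ b ∈ Set.Icc 0 L, ‖θ b - θ a‖ ^ 2 ≤ L * D := by
    intro a ha b hb
    rcases lt_trichotomy a b with h | h | h
    · exact hglob1 a b ha.1 h hb.2
    · subst h; simp; positivity
    · rw [norm_sub_rev]; exact hglob1 b a hb.1 h ha.2
  have hpt : ∀ b ∈ Set.Icc 0 L, L * ‖θ b‖ ^ 2 ≤ 2 * E + 2 * L ^ 2 * D := by
    intro b hb
    have h1 : ∫ s in (0:ℝ)..L, ‖θ b‖ ^ 2 ≤ ∫ s in (0:ℝ)..L, (2 * ‖θ s‖ ^ 2 + 2 * (L * D)) := by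
      apply intervalIntegral.integral_mono_on hL.le (by simp) ((hi.const_mul 2).add (by simp))
      intro s hs
      have h2 := hglob s hs b hb
      have h3 : ‖θ b‖ ≤ ‖θ s‖ + ‖θ b - θ s‖ := by
        have := norm_add_le (θ s) (θ b - θ s)
        simpa using this
      nlinarith [norm_nonneg (θ b), norm_nonneg (θ s), norm_nonneg (θ b - θ s),
        sq_nonneg (‖θ s‖ - ‖θ b - θ s‖)]
    rw [intervalIntegral.integral_add (hi.const_mul 2) (by simp),
      intervalIntegral.integral_const_mul, intervalIntegral.integral_const,
      intervalIntegral.integral_const, ← hE] at h1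
    simp only [smul_eq_mul, sub_zero] at h1
    linarith
  have hx0' : ∀ i, 0 ≤ x i := fun i => hx0 ▸ hx.monotone (Fin.zero_le i)
  have hxL' : ∀ i, x i ≤ L := fun i => hxL ▸ hx.monotone (Fin.le_last i)
  have hlt : ∀ i : Fin N, x i.castSucc < x i.succ := fun i => hx Fin.castSucc_lt_succ
  have hS1 : ∑ i : Fin N, (x i.succ - x i.castSucc) * ‖θ (x i.castSucc)‖ ^ 2
      ≤ 2 * E + 2 * L ^ 2 * D := by
    calc _ ≤ ∑ i : Fin N, (x i.succ - x i.castSucc) * ((2 * E + 2 * L ^ 2 * D) / L) := by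
          apply Finset.sum_le_sum
          intro i _
          apply mul_le_mul_of_nonneg_left _ (sub_pos.2 (hlt i)).le
          rw [le_div_iff₀ hL, mul_comm]
          exact hpt _ ⟨hx0' _, hxL' _⟩
      _ = 2 * E + 2 * L ^ 2 * D := by
          rw [← Finset.sum_mul, aux_tele, hx0, hxL]
          field_simp
          ring
  have hS2 : ∑ i : Fin N, ‖θ (x i.succ) - θ (x i.castSucc)‖ ^ 2 / (x i.succ - x i.castSucc)
      ≤ D := by
    have hint : ∀ i, IntervalIntegrable (fun s => ‖θ' s‖ ^ 2) volume 0 (x i) := fun i =>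
      hi'.mono_set (hsub le_rfl (hx0' i) (hxL' i))
    calc _ ≤ ∑ i : Fin N, ((∫ s in (0:ℝ)..(x i.succ), ‖θ' s‖ ^ 2)
            - ∫ s in (0:ℝ)..(x i.castSucc), ‖θ' s‖ ^ 2) := by
          apply Finset.sum_le_sum
          intro i _
          rw [intervalIntegral.integral_interval_sub_left (hint _) (hint _),
            div_le_iff₀ (sub_pos.2 (hlt i)), mul_comm]
          exact hloc _ _ (hx0' _) (hlt i) (hxL' _)
      _ = D := by
          rw [aux_tele N (fun i => ∫ s in (0:ℝ)..(x i), ‖θ' s‖ ^ 2), hx0, hxL]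
          simp [hD]
  rw [intervalIntegral.integral_add hi hi', ← hD, ← hE]
  nlinarith [mul_nonneg (sq_nonneg L) hE0]
end

section
/- There is a constant C > 0 depending only on L and the quasi-uniformity constants C₁, C₂ such that for every θ ∈ H¹(Γ), the element averages m_i = (1/l_i) ∫_{τ_i} θ(s) ds satisfy Σ_{i=1}^N l_i |m_i|² + Σ_{i=1}^N |m_{i+1} − m_i|² / l_i ≤ C ‖θ‖²_{H¹(Γ)}. Equivalently, the L²-orthogonal projection Π θ of θ onto the piecewise constant space M satisfies (A Π θ, Π θ)_Γ ≤ C ‖θ‖²_{H¹(Γ)}. -/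
open MeasureTheory

lemma cs_aux (a b : ℝ) (hab : a < b) (f : ℝ → ℝ) (hf : IntervalIntegrable f volume a b)
    (hf2 : IntervalIntegrable (fun s => f s ^ 2) volume a b) :
    (∫ s in a..b, f s) ^ 2 ≤ (b - a) * ∫ s in a..b, f s ^ 2 := by
  set I := ∫ s in a..b, f s with hI
  set c := I / (b - a) with hc
  have hpos : 0 < b - a := by linarith
  have h0 : 0 ≤ ∫ s in a..b, (f s - c) ^ 2 :=
    intervalIntegral.integral_nonneg hab.le (fun s _ => sq_nonneg _)
  have h1 : ∫ s in a..b, (f s - c) ^ 2 = (∫ s in a..b, f s ^ 2) - 2 * c * I + (b - a) * c ^ 2 := by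
    have : (fun s => (f s - c) ^ 2) = fun s => (f s ^ 2 - 2 * c * f s) + c ^ 2 := by
      ext s; ring
    rw [this, intervalIntegral.integral_add (hf2.sub (hf.const_mul _)) (by simp),
      intervalIntegral.integral_sub hf2 (hf.const_mul _), intervalIntegral.integral_const_mul,
      intervalIntegral.integral_const, smul_eq_mul]
  rw [h1] at h0
  have hcI : I = c * (b - a) := by rw [hc]; field_simp
  have := mul_nonneg hpos.le h0
  rw [hcI] at this ⊢
  nlinarith

lemma cs_cplx (a b : ℝ) (hab : a < b) (f : ℝ → ℂ) (hf : IntervalIntegrable f volume a b)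
    (hf2 : IntervalIntegrable (fun s => ‖f s‖ ^ 2) volume a b) :
    ‖∫ s in a..b, f s‖ ^ 2 ≤ (b - a) * ∫ s in a..b, ‖f s‖ ^ 2 := by
  refine le_trans ?_ (cs_aux a b hab (fun s => ‖f s‖) hf.norm hf2)
  have := intervalIntegral.norm_integral_le_integral_norm (f := f) (μ := volume) hab.le
  gcongr

lemma avg_aux (a b K : ℝ) (hab : a < b) (f : ℝ → ℂ) (v : ℂ) (hf : IntervalIntegrable f volume a b)
    (hK : ∀ s ∈ Set.Icc a b, ‖f s - v‖ ≤ K) :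
    ‖((1 / (b - a) : ℝ) : ℂ) * (∫ s in a..b, f s) - v‖ ≤ K := by
  have hpos : 0 < b - a := by linarith
  have h1 : ‖∫ s in a..b, (f s - v)‖ ≤ K * |b - a| := by
    apply intervalIntegral.norm_integral_le_of_norm_le_const
    intro s hs
    rw [Set.uIoc_of_le hab.le] at hs
    exact hK s ⟨hs.1.le, hs.2⟩
  rw [intervalIntegral.integral_sub hf (by simp), intervalIntegral.integral_const,
    abs_of_pos hpos] at h1
  have h2 : ((1 / (b - a) : ℝ) : ℂ) * (∫ s in a..b, f s) - v
      = ((1 / (b - a) : ℝ) : ℂ) * ((∫ s in a..b, f s) - (b - a) • v) := by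
    have : ((b - a : ℝ) : ℂ) ≠ 0 := by exact_mod_cast hpos.ne'
    rw [Complex.real_smul, Complex.ofReal_div]
    field_simp
    simp
  rw [h2, norm_mul, Complex.norm_real, Real.norm_of_nonneg (by positivity)]
  calc _ ≤ 1 / (b - a) * (K * (b - a)) := by gcongr
    _ = K := by field_simp

lemma tele_aux (N : ℕ) (y : Fin (N + 1) → ℝ) :
    ∑ i : Fin N, (y i.succ - y i.castSucc) = y (Fin.last N) - y 0 := by
  induction N with
  | zero => simp
  | succ n ih =>
    rw [Fin.sum_univ_castSucc]
    have := ih (fun i => y i.castSucc)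
    simp only [Fin.succ_castSucc] at *
    rw [this]
    simp

lemma pieces_aux (L : ℝ) (g : ℝ → ℝ) (hg : IntervalIntegrable g volume 0 L) (N : ℕ)
    (x : Fin (N + 1) → ℝ) (hx : ∀ i, x i ∈ Set.Icc 0 L) (h0 : x 0 = 0) (hl : x (Fin.last N) = L) :
    ∑ i : Fin N, ∫ s in (x i.castSucc)..(x i.succ), g s = ∫ s in (0:ℝ)..L, g s := by
  have hi : ∀ i, IntervalIntegrable g volume 0 (x i) := fun i => hg.mono_set (by
    rw [Set.uIcc_of_le (hx i).1, Set.uIcc_of_le ((hx i).1.trans (hx i).2)]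
    exact Set.Icc_subset_Icc_right (hx i).2)
  have := tele_aux N (fun i => ∫ s in (0:ℝ)..(x i), g s)
  simp only [h0, hl, intervalIntegral.integral_same, sub_zero] at this
  rw [← this]
  refine Finset.sum_congr rfl fun i _ => ?_
  rw [intervalIntegral.integral_interval_sub_left (hi _) (hi _)]

/-- There is a constant `C > 0` depending only on `L` and the
quasi-uniformity constants `C₁, C₂` such that for every quasi-uniform partition
`0 = x₁ < ⋯ < x_{N+1} = L` of `Γ` (with `C₁ h ≤ l_i ≤ C₂ h`, `h = max_i l_i`) and every
`θ ∈ H¹(Γ)`, the element averages `m_i = (1/l_i) ∫_{τ_i} θ(s) ds` satisfy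
`∑_{i=1}^N l_i |m_i|² + ∑_{i=1}^N |m_{i+1} − m_i|² / l_i ≤ C ‖θ‖²_{H¹(Γ)}`
(indices mod `N`); equivalently `(A Π θ, Π θ)_Γ ≤ C ‖θ‖²_{H¹(Γ)}` for the `L²`-projection
`Π θ` onto the piecewise constants. -/
theorem stmt_9 (L C₁ C₂ : ℝ) (hL : 0 < L) (hC₁ : 0 < C₁) (hC₂ : 0 < C₂) :
    ∃ C > 0, ∀ (N : ℕ) [NeZero N], 2 ≤ N →
      ∀ (x : Fin (N + 1) → ℝ), StrictMono x → x 0 = 0 → x (Fin.last N) = L →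
      ∀ h : ℝ, IsGreatest (Set.range fun i : Fin N => x i.succ - x i.castSucc) h →
      (∀ i : Fin N, C₁ * h ≤ x i.succ - x i.castSucc ∧ x i.succ - x i.castSucc ≤ C₂ * h) →
      ∀ (θ θ' : ℝ → ℂ), (∀ s, θ (s + L) = θ s) →
      (∀ a b : ℝ, a ≤ b → θ b = θ a + ∫ t in a..b, θ' t) →
      MemLp θ 2 (volume.restrict (Set.Ioo 0 L)) →
      MemLp θ' 2 (volume.restrict (Set.Ioo 0 L)) →
      (let l : Fin N → ℝ := fun i => x i.succ - x i.castSucc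
       let m : Fin N → ℂ := fun i =>
         ((1 / l i : ℝ) : ℂ) * ∫ s in (x i.castSucc)..(x i.succ), θ s
       (∑ i, l i * ‖m i‖ ^ 2) + ∑ i, ‖m (i + 1) - m i‖ ^ 2 / l i
         ≤ C * ∫ s in (0:ℝ)..L, (‖θ s‖ ^ 2 + ‖θ' s‖ ^ 2)) := by
  refine ⟨3 + 2 * (C₂ / C₁), by positivity, ?_⟩
  intro N _ hN x hx h0 hl h hh hq θ θ' hper hac hθ hθ' l m
  have hmem : ∀ i, x i ∈ Set.Icc 0 L := fun i =>
    ⟨h0 ▸ hx.monotone (Fin.zero_le i), hl ▸ hx.monotone (Fin.le_last i)⟩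
  have hlt : ∀ i : Fin N, x i.castSucc < x i.succ := fun i => hx Fin.castSucc_lt_succ
  have hlpos : ∀ i, 0 < l i := fun i => sub_pos.2 (hlt i)
  have hhpos : 0 < h := by
    obtain ⟨⟨i, hi⟩, _⟩ := hh
    rw [← hi]; exact hlpos i
  have hint : ∀ f : ℝ → ℂ, MemLp f 2 (volume.restrict (Set.Ioo 0 L)) →
      IntervalIntegrable f volume 0 L ∧ IntervalIntegrable (fun s => ‖f s‖ ^ 2) volume 0 L := by
    intro f hf
    rw [intervalIntegrable_iff_integrableOn_Ioo_of_le hL.le,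
      intervalIntegrable_iff_integrableOn_Ioo_of_le hL.le]
    exact ⟨hf.integrable (by norm_num), hf.integrable_norm_pow (by norm_num)⟩
  obtain ⟨hi1, hi2⟩ := hint θ hθ
  obtain ⟨hj1, hj2⟩ := hint θ' hθ'
  have hsub : ∀ a ∈ Set.Icc 0 L, ∀ b ∈ Set.Icc 0 L, Set.uIcc a b ⊆ Set.uIcc 0 L := by
    intro a ha b hb
    rw [Set.uIcc_of_le hL.le]
    exact Set.uIcc_subset_Icc ha hb
  have hS : ∀ i : Fin N, Set.uIcc (x i.castSucc) (x i.succ) ⊆ Set.uIcc 0 L :=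
    fun i => hsub _ (hmem _) _ (hmem _)
  set D : Fin N → ℝ := fun i => ∫ s in (x i.castSucc)..(x i.succ), ‖θ' s‖ ^ 2 with hD
  have hDnn : ∀ i, 0 ≤ D i := fun i =>
    intervalIntegral.integral_nonneg (hlt i).le (fun s _ => sq_nonneg _)
  -- Oscillation bound on subintervals of an element.
  have hosc : ∀ i : Fin N, ∀ a b, x i.castSucc ≤ a → a ≤ b → b ≤ x i.succ →
      ‖θ b - θ a‖ ≤ Real.sqrt (l i * D i) := by
    intro i a b ha hab hb
    apply Real.le_sqrt_of_sq_le
    rw [hac a b hab, add_sub_cancel_left]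
    have e1 : ‖∫ t in a..b, θ' t‖ ≤ ∫ t in a..b, ‖θ' t‖ :=
      intervalIntegral.norm_integral_le_integral_norm hab
    have e2 : ∫ t in a..b, ‖θ' t‖ ≤ ∫ t in (x i.castSucc)..(x i.succ), ‖θ' t‖ :=
      intervalIntegral.integral_mono_interval ha hab hb
        (Filter.Eventually.of_forall fun _ => norm_nonneg _) (hj1.mono_set (hS i)).norm
    have e3 := cs_aux _ _ (hlt i) (fun s => ‖θ' s‖) (hj1.mono_set (hS i)).norm
      (hj2.mono_set (hS i))
    exact (pow_le_pow_left₀ (norm_nonneg _) (e1.trans e2) 2).trans e3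
  have hR : ∀ i, ‖m i - θ (x i.succ)‖ ^ 2 ≤ l i * D i := by
    intro i
    have := avg_aux _ _ (Real.sqrt (l i * D i)) (hlt i) θ (θ (x i.succ)) (hi1.mono_set (hS i))
      (fun s hs => by rw [norm_sub_rev]; exact hosc i s _ hs.1 hs.2 le_rfl)
    calc _ ≤ Real.sqrt (l i * D i) ^ 2 := pow_le_pow_left₀ (norm_nonneg _) this 2
      _ = _ := Real.sq_sqrt (mul_nonneg (hlpos i).le (hDnn i))
  have hLf : ∀ i, ‖m i - θ (x i.castSucc)‖ ^ 2 ≤ l i * D i := by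
    intro i
    have := avg_aux _ _ (Real.sqrt (l i * D i)) (hlt i) θ (θ (x i.castSucc))
      (hi1.mono_set (hS i)) (fun s hs => hosc i _ s le_rfl hs.1 hs.2)
    calc _ ≤ Real.sqrt (l i * D i) ^ 2 := pow_le_pow_left₀ (norm_nonneg _) this 2
      _ = _ := Real.sq_sqrt (mul_nonneg (hlpos i).le (hDnn i))
  have hshare : ∀ i : Fin N, θ (x (i + 1).castSucc) = θ (x i.succ) := by
    obtain ⟨n, rfl⟩ : ∃ n, N = n + 1 := ⟨N - 1, by omega⟩
    intro i
    rcases eq_or_ne i (Fin.last n) with rfl | hne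
    · have e1 : (Fin.last n + 1 : Fin (n + 1)) = 0 := Fin.last_add_one n
      rw [e1, Fin.succ_last, hl, Fin.castSucc_zero, h0]
      have := hper 0
      rw [zero_add] at this
      exact this.symm
    · congr 2
      have hlt' : i < Fin.last n := Fin.lt_last_iff_ne_last.2 hne
      ext
      simp [Fin.val_add_one_of_lt hlt']
  have hratio : ∀ i j, l j / l i ≤ C₂ / C₁ := by
    intro i j
    rw [div_le_div_iff₀ (hlpos i) hC₁]
    have a1 := mul_le_mul_of_nonneg_left (hq i).1 hC₂.le
    have a2 := mul_le_mul_of_nonneg_right (hq j).2 hC₁.le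
    calc l j * C₁ ≤ C₂ * h * C₁ := a2
      _ = C₂ * (C₁ * h) := by ring
      _ ≤ _ := a1
  have hterm2 : ∀ i, ‖m (i + 1) - m i‖ ^ 2 / l i ≤ 2 * D i + 2 * (C₂ / C₁) * D (i + 1) := by
    intro i
    have t : ‖m (i + 1) - m i‖ ≤
        ‖m (i + 1) - θ (x (i + 1).castSucc)‖ + ‖m i - θ (x i.succ)‖ := by
      have : m (i + 1) - m i = (m (i + 1) - θ (x (i + 1).castSucc)) - (m i - θ (x i.succ)) := by
        rw [hshare]; ring
      rw [this]; exact norm_sub_le _ _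
    have t2 : ‖m (i + 1) - m i‖ ^ 2 ≤ 2 * (l (i + 1) * D (i + 1)) + 2 * (l i * D i) := by
      have := pow_le_pow_left₀ (norm_nonneg _) t 2
      have r1 := hR i
      have r2 := hLf (i + 1)
      nlinarith [sq_nonneg (‖m (i + 1) - θ (x (i + 1).castSucc)‖ - ‖m i - θ (x i.succ)‖)]
    have hp := hlpos i
    calc _ ≤ (2 * (l (i + 1) * D (i + 1)) + 2 * (l i * D i)) / l i := by gcongr
      _ = 2 * D i + 2 * (l (i + 1) / l i) * D (i + 1) := by field_simp; ring
      _ ≤ _ := by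
        have := mul_le_mul_of_nonneg_right (hratio i (i + 1)) (hDnn (i + 1))
        linarith
  have hterm1 : ∀ i, l i * ‖m i‖ ^ 2 ≤ ∫ s in (x i.castSucc)..(x i.succ), ‖θ s‖ ^ 2 := by
    intro i
    have hp := hlpos i
    have e := cs_cplx _ _ (hlt i) θ (hi1.mono_set (hS i)) (hi2.mono_set (hS i))
    change _ ≤ l i * _ at e
    have : l i * ‖m i‖ ^ 2 = ‖∫ s in (x i.castSucc)..(x i.succ), θ s‖ ^ 2 / l i := by
      simp only [m]
      rw [norm_mul, Complex.norm_real, Real.norm_of_nonneg (by positivity)]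
      field_simp
    rw [this, div_le_iff₀ hp, mul_comm]
    exact e
  have s1 := (Finset.sum_le_sum fun i (_ : i ∈ Finset.univ) => hterm1 i)
  have s2 := (Finset.sum_le_sum fun i (_ : i ∈ Finset.univ) => hterm2 i)
  rw [pieces_aux L _ hi2 N x hmem h0 hl] at s1
  have s3 : ∑ i, D i = ∫ s in (0:ℝ)..L, ‖θ' s‖ ^ 2 := pieces_aux L _ hj2 N x hmem h0 hl
  have s4 : ∑ i, D (i + 1) = ∑ i, D i := Equiv.sum_comp (Equiv.addRight (1 : Fin N)) D
  rw [Finset.sum_add_distrib, ← Finset.mul_sum, ← Finset.mul_sum, s4, s3] at s2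
  rw [intervalIntegral.integral_add hi2 hj2]
  have p1 : 0 ≤ ∫ s in (0:ℝ)..L, ‖θ s‖ ^ 2 :=
    intervalIntegral.integral_nonneg hL.le (fun s _ => sq_nonneg _)
  have p2 : 0 ≤ ∫ s in (0:ℝ)..L, ‖θ' s‖ ^ 2 :=
    intervalIntegral.integral_nonneg hL.le (fun s _ => sq_nonneg _)
  have p3 : 0 < C₂ / C₁ := by positivity
  have p4 := mul_nonneg p3.le p1
  nlinarith
end

section
/- There exist constants c, C > 0 depending only on L and the quasi-uniformity constants C₁, C₂ (and in particular independent of N and h) such that for every quasi-uniform partition of Γ and every piecewise constant σ ∈ M, c ‖σ‖²_{H^{−1}(Γ)} ≤ (A^{−1} σ, σ)_Γ ≤ C ‖σ‖²_{H^{−1}(Γ)}. (Here A^{−1} is well defined since the quadratic form of A is positive definite on M.) -/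
open MeasureTheory
open scoped ComplexOrder

/-- The operator `A : M → M` on piecewise constants (identified with their value vectors
`c : Fin N → ℂ`, indices mod `N`): `(Aσ)|_{τ_i} = c_i − ((c_{i+1} − c_i)/l_i² − (c_i − c_{i−1})/(l_i l_{i−1}))`. -/
noncomputable def Aop {N : ℕ} [NeZero N] (l : Fin N → ℝ) (c : Fin N → ℂ) : Fin N → ℂ :=
  fun i => c i - ((c (i + 1) - c i) / (l i : ℂ) ^ 2
    - (c i - c (i - 1)) / ((l i : ℂ) * (l (i - 1) : ℂ)))

/-- The `L²(0,L)` inner product of two piecewise constants with value vectors `c, d`: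
`(σ, μ)_Γ = ∑ i, c_i \overline{d_i} l_i`. -/
noncomputable def ipGamma {N : ℕ} (l : Fin N → ℝ) (c d : Fin N → ℂ) : ℂ :=
  ∑ i, c i * (starRingEnd ℂ) (d i) * (l i : ℂ)

/-- The set of numbers `|∫₀^L σ \overline{θ} ds|` where `θ` ranges over the unit ball of
`H¹(Γ)` (`L`-periodic, locally absolutely continuous with derivative `θ'`, `θ, θ' ∈ L²(0,L)`,
`‖θ‖²_{H¹} = ∫₀^L (|θ|² + |θ'|²) ≤ 1`), and `σ` is the piecewise constant with values `c`
on the partition `x`, so that `∫₀^L σ \overline{θ} = ∑ i, c_i ∫_{τ_i} \overline{θ}`.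
The supremum of this set is the dual norm `‖σ‖_{H^{−1}(Γ)}`. -/
def Hm1Set (L : ℝ) {N : ℕ} (x : Fin (N + 1) → ℝ) (c : Fin N → ℂ) : Set ℝ :=
  { r | ∃ θ θ' : ℝ → ℂ,
      (∀ s, θ (s + L) = θ s) ∧
      (∀ a b : ℝ, a ≤ b → θ b = θ a + ∫ t in a..b, θ' t) ∧
      MemLp θ 2 (volume.restrict (Set.Ioo 0 L)) ∧
      MemLp θ' 2 (volume.restrict (Set.Ioo 0 L)) ∧
      (∫ s in (0:ℝ)..L, (‖θ s‖ ^ 2 + ‖θ' s‖ ^ 2)) ≤ 1 ∧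
      r = ‖∑ i : Fin N, c i * ∫ s in (x i.castSucc)..(x i.succ), (starRingEnd ℂ) (θ s)‖ }


/-- Splitting an interval integral over a partition. -/
lemma sum_adj {E : Type*} [NormedAddCommGroup E] [NormedSpace ℝ E] (f : ℝ → E) :
    ∀ (N : ℕ) (x : Fin (N + 1) → ℝ),
      (∀ i : Fin N, IntervalIntegrable f volume (x i.castSucc) (x i.succ)) →
      IntervalIntegrable f volume (x 0) (x (Fin.last N)) ∧
      ∑ i : Fin N, ∫ s in (x i.castSucc)..(x i.succ), f s = ∫ s in (x 0)..(x (Fin.last N)), f s := by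
  intro N
  induction N with
  | zero => intro x _; simp
  | succ n ih =>
    intro x hx
    obtain ⟨h1, h2⟩ := ih (fun i => x i.castSucc) (fun i => hx i.castSucc)
    have h3 := hx (Fin.last n)
    refine ⟨h1.trans h3, ?_⟩
    rw [Fin.sum_univ_castSucc]
    have : ∑ i : Fin n, ∫ s in (x i.castSucc.castSucc)..(x i.castSucc.succ), f s
      = ∫ s in (x 0)..(x (Fin.last n).castSucc), f s := h2
    rw [this]
    exact intervalIntegral.integral_add_adjacent_intervals h1 h3

lemma cyc_node {α : Type*} {N : ℕ} [NeZero N] (x : Fin (N + 1) → ℝ) (F : ℝ → α)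
    (hF : F (x (Fin.last N)) = F (x 0)) (i : Fin N) :
    F (x i.succ) = F (x (i + 1).castSucc) := by
  obtain ⟨n, rfl⟩ : ∃ n, N = n + 1 := ⟨N - 1, by have := NeZero.ne N; omega⟩
  induction i using Fin.lastCases with
  | last => simpa using hF
  | cast i =>
    congr 2
    ext
    simp

lemma nodes_mem {N : ℕ} {x : Fin (N + 1) → ℝ} (hx : StrictMono x) {L : ℝ} (h0 : x 0 = 0)
    (hl : x (Fin.last N) = L) (j : Fin (N + 1)) : 0 ≤ x j ∧ x j ≤ L := by
  rw [← h0, ← hl]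
  exact ⟨hx.monotone (Fin.zero_le j), hx.monotone (Fin.le_last j)⟩

/-- the discrete energy -/
noncomputable def Qd {N : ℕ} [NeZero N] (l : Fin N → ℝ) (d : Fin N → ℂ) : ℝ :=
  ∑ i, (l i * ‖d i‖ ^ 2 + ‖d (i + 1) - d i‖ ^ 2 / l i)

lemma sum_shift {N : ℕ} [NeZero N] {α : Type*} [AddCommMonoid α] (F : Fin N → α) :
    ∑ i, F (i + 1) = ∑ i, F i := Equiv.sum_comp (Equiv.addRight (1 : Fin N)) F

lemma form_eq {N : ℕ} [NeZero N] (l : Fin N → ℝ) (hl : ∀ i, 0 < l i) (d m : Fin N → ℂ) :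
    ∑ i, Aop l d i * ((l i : ℂ) * (starRingEnd ℂ) (m i)) =
      ∑ i, ((l i : ℂ) * (d i * (starRingEnd ℂ) (m i)) +
        (d (i + 1) - d i) * (starRingEnd ℂ) (m (i + 1) - m i) / (l i : ℂ)) := by
  have hs := sum_shift (fun i => (d i - d (i - 1)) / (l (i - 1) : ℂ) * (starRingEnd ℂ) (m i))
  simp only [add_sub_cancel_right] at hs
  have e1 : ∀ i, Aop l d i * ((l i : ℂ) * (starRingEnd ℂ) (m i)) =
      ((l i : ℂ) * (d i * (starRingEnd ℂ) (m i)) -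
        (d (i + 1) - d i) * (starRingEnd ℂ) (m i) / (l i : ℂ)) +
      (d i - d (i - 1)) / (l (i - 1) : ℂ) * (starRingEnd ℂ) (m i) := by
    intro i
    have h1 : (l i : ℂ) ≠ 0 := by exact_mod_cast (hl i).ne'
    have h2 : (l (i - 1) : ℂ) ≠ 0 := by exact_mod_cast (hl (i - 1)).ne'
    simp only [Aop]
    field_simp
    ring
  rw [Finset.sum_congr rfl (fun i _ => e1 i), Finset.sum_add_distrib, ← hs,
    ← Finset.sum_add_distrib]
  refine Finset.sum_congr rfl (fun i _ => ?_)
  rw [map_sub]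
  ring

lemma form_self {N : ℕ} [NeZero N] (l : Fin N → ℝ) (hl : ∀ i, 0 < l i) (d : Fin N → ℂ) :
    ∑ i, Aop l d i * ((l i : ℂ) * (starRingEnd ℂ) (d i)) = (Qd l d : ℂ) := by
  rw [form_eq l hl, Qd]
  push_cast
  refine Finset.sum_congr rfl (fun i _ => ?_)
  rw [Complex.mul_conj', Complex.mul_conj']

lemma ip_eq {N : ℕ} [NeZero N] (l : Fin N → ℝ) (hl : ∀ i, 0 < l i) (d : Fin N → ℂ) :
    ipGamma l d (Aop l d) = (Qd l d : ℂ) := by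
  have h := congrArg (starRingEnd ℂ) (form_self l hl d)
  rw [Complex.conj_ofReal, map_sum] at h
  rw [← h, ipGamma]
  refine Finset.sum_congr rfl (fun i _ => ?_)
  simp
  ring

lemma Qd_nonneg {N : ℕ} [NeZero N] (l : Fin N → ℝ) (hl : ∀ i, 0 < l i) (d : Fin N → ℂ) :
    0 ≤ Qd l d :=
  Finset.sum_nonneg fun i _ => by have := hl i; positivity

lemma Qd_smul {N : ℕ} [NeZero N] (l : Fin N → ℝ) (d : Fin N → ℂ) (k : ℝ) :
    Qd l (fun i => (k : ℂ) * d i) = k ^ 2 * Qd l d := by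
  simp only [Qd, Finset.mul_sum]
  refine Finset.sum_congr rfl (fun i _ => ?_)
  rw [← mul_sub, norm_mul, norm_mul, mul_pow, mul_pow, Complex.norm_real, Real.norm_eq_abs, sq_abs]
  ring

lemma form_cs {N : ℕ} [NeZero N] (l : Fin N → ℝ) (hl : ∀ i, 0 < l i) (d m : Fin N → ℂ) :
    ‖∑ i, Aop l d i * ((l i : ℂ) * (starRingEnd ℂ) (m i))‖ ^ 2 ≤ Qd l d * Qd l m := by
  rw [form_eq l hl]
  have h1 : ‖∑ i, ((l i : ℂ) * (d i * (starRingEnd ℂ) (m i)) +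
        (d (i + 1) - d i) * (starRingEnd ℂ) (m (i + 1) - m i) / (l i : ℂ))‖ ≤
      ∑ i, (l i * (‖d i‖ * ‖m i‖) + ‖d (i + 1) - d i‖ * ‖m (i + 1) - m i‖ / l i) := by
    refine (norm_sum_le _ _).trans (Finset.sum_le_sum fun i _ => ?_)
    refine (norm_add_le _ _).trans (le_of_eq ?_)
    simp only [norm_mul, norm_div, RCLike.norm_conj, Complex.norm_real, Real.norm_eq_abs,
      abs_of_pos (hl i)]
  have h2 := Finset.sum_sq_le_sum_mul_sum_of_sq_le_mul
    (Finset.univ : Finset (Fin N ⊕ Fin N))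
    (r := Sum.elim (fun i => l i * (‖d i‖ * ‖m i‖))
      (fun i => ‖d (i + 1) - d i‖ * ‖m (i + 1) - m i‖ / l i))
    (f := Sum.elim (fun i => l i * ‖d i‖ ^ 2) (fun i => ‖d (i + 1) - d i‖ ^ 2 / l i))
    (g := Sum.elim (fun i => l i * ‖m i‖ ^ 2) (fun i => ‖m (i + 1) - m i‖ ^ 2 / l i))
    (by rintro (i | i) _ <;> have := hl i <;> simp <;> positivity)
    (by rintro (i | i) _ <;> have := hl i <;> simp <;> positivity)
    (by rintro (i | i) _ <;> refine le_of_eq ?_ <;> simp <;> ring)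
  simp only [Fintype.sum_sum_type, Sum.elim_inl, Sum.elim_inr, ← Finset.sum_add_distrib] at h2
  exact (pow_le_pow_left₀ (norm_nonneg _) h1 2).trans h2

/-- Cauchy–Schwarz on an interval -/
lemma cs_int (f : ℝ → ℂ) (a b : ℝ) (hab : a < b) (hf : MemLp f 2 (volume.restrict (Set.Ioc a b))) :
    (∫ s in a..b, ‖f s‖) ^ 2 ≤ (b - a) * ∫ s in a..b, ‖f s‖ ^ 2 := by
  have i1 : IntervalIntegrable (fun s => ‖f s‖) volume a b := by
    rw [intervalIntegrable_iff_integrableOn_Ioc_of_le hab.le]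
    exact (hf.integrable (by norm_num)).norm
  have i2 : IntervalIntegrable (fun s => ‖f s‖ ^ 2) volume a b := by
    rw [intervalIntegrable_iff_integrableOn_Ioc_of_le hab.le]
    exact hf.norm.integrable_sq
  set A := ∫ s in a..b, ‖f s‖ with hA
  set u := A / (b - a) with hu
  have hp : 0 < b - a := sub_pos.2 hab
  have h0 : 0 ≤ ∫ s in a..b, (‖f s‖ - u) ^ 2 :=
    intervalIntegral.integral_nonneg hab.le fun s _ => sq_nonneg _
  have h1 : ∫ s in a..b, (‖f s‖ - u) ^ 2 =
      (∫ s in a..b, ‖f s‖ ^ 2) - 2 * u * A + (b - a) * u ^ 2 := by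
    have : ∀ s, (‖f s‖ - u) ^ 2 = ‖f s‖ ^ 2 - 2 * u * ‖f s‖ + u ^ 2 := fun s => by ring
    simp only [this]
    rw [intervalIntegral.integral_add (i2.sub (i1.const_mul _)) (by simp),
      intervalIntegral.integral_sub i2 (i1.const_mul _), intervalIntegral.integral_const_mul]
    simp only [intervalIntegral.integral_const, smul_eq_mul]
    rfl
  have hA' : A = u * (b - a) := by rw [hu]; field_simp
  rw [h1] at h0
  rw [hA'] at h0 ⊢
  nlinarith

lemma mean_near (θ : ℝ → ℂ) (a b p : ℝ) (z : ℂ) (hab : a < b)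
    (hθ : IntervalIntegrable θ volume a b) (h : ∀ s ∈ Set.Ioc a b, ‖θ s - z‖ ≤ p) :
    ‖(∫ s in a..b, θ s) / ((b - a : ℝ) : ℂ) - z‖ ≤ p := by
  have hp : 0 < b - a := sub_pos.2 hab
  have h1 : ‖∫ s in a..b, (θ s - z)‖ ≤ p * |b - a| :=
    intervalIntegral.norm_integral_le_of_norm_le_const (by rwa [Set.uIoc_of_le hab.le])
  rw [intervalIntegral.integral_sub hθ (by simp), intervalIntegral.integral_const,
    abs_of_pos hp] at h1
  have hne : ((b - a : ℝ) : ℂ) ≠ 0 := by exact_mod_cast hp.ne'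
  have h2 : (∫ s in a..b, θ s) / ((b - a : ℝ) : ℂ) - z =
      ((∫ s in a..b, θ s) - (b - a) • z) / ((b - a : ℝ) : ℂ) := by
    rw [Complex.real_smul]; field_simp
  rw [h2, norm_div, Complex.norm_real, Real.norm_eq_abs, abs_of_pos hp, div_le_iff₀ hp]
  exact h1

lemma bound_set {L : ℝ} {N : ℕ} [NeZero N] (x : Fin (N + 1) → ℝ) (hx : StrictMono x)
    (h0 : x 0 = 0) (hlast : x (Fin.last N) = L) (R : ℝ) (hR0 : 0 ≤ R)
    (l : Fin N → ℝ) (hldef : l = fun i => x i.succ - x i.castSucc)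
    (hR : ∀ i, l (i + 1) ≤ R * l i) (d : Fin N → ℂ) (r : ℝ)
    (hr : r ∈ Hm1Set L x (Aop l d)) : r ^ 2 ≤ Qd l d * (1 + 2 * (R + 1)) := by
  obtain ⟨θ, θ', hper, hac, hm, hm', hE, rfl⟩ := hr
  have hlt : ∀ i : Fin N, x i.castSucc < x i.succ := fun i => hx (Fin.castSucc_lt_succ)
  have hl : ∀ i, 0 < l i := fun i => by rw [hldef]; exact sub_pos.2 (hlt i)
  have hL : 0 ≤ L := by have := (nodes_mem hx h0 hlast 0); linarith
  rw [restrict_Ioo_eq_restrict_Ioc] at hm hm'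
  have hsub : ∀ i : Fin N, Set.Ioc (x i.castSucc) (x i.succ) ⊆ Set.Ioc 0 L := fun i =>
    Set.Ioc_subset_Ioc (nodes_mem hx h0 hlast _).1 (nodes_mem hx h0 hlast _).2
  have hmi : ∀ i : Fin N, MemLp θ 2 (volume.restrict (Set.Ioc (x i.castSucc) (x i.succ))) :=
    fun i => hm.mono_measure (Measure.restrict_mono (hsub i) le_rfl)
  have hmi' : ∀ i : Fin N, MemLp θ' 2 (volume.restrict (Set.Ioc (x i.castSucc) (x i.succ))) :=
    fun i => hm'.mono_measure (Measure.restrict_mono (hsub i) le_rfl)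
  have hθi : ∀ i : Fin N, IntervalIntegrable θ volume (x i.castSucc) (x i.succ) := fun i => by
    rw [intervalIntegrable_iff_integrableOn_Ioc_of_le (hlt i).le]
    exact (hmi i).integrable (by norm_num)
  have hθi' : ∀ i : Fin N, IntervalIntegrable θ' volume (x i.castSucc) (x i.succ) := fun i => by
    rw [intervalIntegrable_iff_integrableOn_Ioc_of_le (hlt i).le]
    exact (hmi' i).integrable (by norm_num)
  have hsq : ∀ i : Fin N, IntervalIntegrable (fun s => ‖θ s‖ ^ 2) volume (x i.castSucc) (x i.succ) :=
    fun i => by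
    rw [intervalIntegrable_iff_integrableOn_Ioc_of_le (hlt i).le]
    exact (hmi i).norm.integrable_sq
  have hsq' : ∀ i : Fin N,
      IntervalIntegrable (fun s => ‖θ' s‖ ^ 2) volume (x i.castSucc) (x i.succ) := fun i => by
    rw [intervalIntegrable_iff_integrableOn_Ioc_of_le (hlt i).le]
    exact (hmi' i).norm.integrable_sq
  set F : Fin N → ℝ := fun i => ∫ s in (x i.castSucc)..(x i.succ), ‖θ s‖ ^ 2 with hF
  set E : Fin N → ℝ := fun i => ∫ s in (x i.castSucc)..(x i.succ), ‖θ' s‖ ^ 2 with hEd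
  set p : Fin N → ℝ := fun i => ∫ s in (x i.castSucc)..(x i.succ), ‖θ' s‖ with hp
  set m : Fin N → ℂ := fun i => (∫ s in (x i.castSucc)..(x i.succ), θ s) / (l i : ℂ) with hmdef
  have hE0 : ∀ i, 0 ≤ E i := fun i =>
    intervalIntegral.integral_nonneg (hlt i).le fun s _ => sq_nonneg _
  have hF0 : ∀ i, 0 ≤ F i := fun i =>
    intervalIntegral.integral_nonneg (hlt i).le fun s _ => sq_nonneg _
  have hp0 : ∀ i, 0 ≤ p i := fun i =>
    intervalIntegral.integral_nonneg (hlt i).le fun s _ => norm_nonneg _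
  have hFE : ∑ i, F i + ∑ i, E i ≤ 1 := by
    have := (sum_adj (fun s => ‖θ s‖ ^ 2 + ‖θ' s‖ ^ 2) N x (fun i => (hsq i).add (hsq' i))).2
    rw [h0, hlast] at this
    rw [← this] at hE
    rw [← Finset.sum_add_distrib]
    refine le_trans (le_of_eq ?_) hE
    refine Finset.sum_congr rfl (fun i _ => ?_)
    exact (intervalIntegral.integral_add (hsq i) (hsq' i)).symm
  have hpE : ∀ i, p i ^ 2 ≤ l i * E i := fun i => by
    have := cs_int θ' _ _ (hlt i) (hmi' i)
    rw [hldef]; exact this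
  have hmF : ∀ i, l i * ‖m i‖ ^ 2 ≤ F i := fun i => by
    have h1 := cs_int θ _ _ (hlt i) (hmi i)
    have h2 : ‖∫ s in (x i.castSucc)..(x i.succ), θ s‖ ≤ ∫ s in (x i.castSucc)..(x i.succ), ‖θ s‖ :=
      intervalIntegral.norm_integral_le_integral_norm (hlt i).le
    have h3 : ‖∫ s in (x i.castSucc)..(x i.succ), θ s‖ ^ 2 ≤ l i * F i :=
      (pow_le_pow_left₀ (norm_nonneg _) h2 2).trans (by rw [hldef]; exact h1)
    have h4 := hl i
    simp only [hmdef, norm_div, Complex.norm_real, Real.norm_eq_abs, abs_of_pos h4]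
    rw [div_pow, mul_div_assoc', div_le_iff₀ (by positivity)]
    nlinarith
  have hsubint : ∀ i : Fin N, ∀ u v, x i.castSucc ≤ u → u ≤ v → v ≤ x i.succ →
      ‖θ v - θ u‖ ≤ p i := fun i u v h1 h2 h3 => by
    rw [hac u v h2, add_sub_cancel_left]
    refine (intervalIntegral.norm_integral_le_integral_norm h2).trans ?_
    exact intervalIntegral.integral_mono_interval h1 h2 h3
      (Filter.Eventually.of_forall fun s => norm_nonneg _) (hθi' i).norm
  have hleft : ∀ i, ‖m i - θ (x i.castSucc)‖ ≤ p i := fun i => by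
    have := mean_near θ _ _ (p i) (θ (x i.castSucc)) (hlt i) (hθi i)
      (fun s hs => hsubint i _ _ le_rfl hs.1.le hs.2)
    simpa only [hmdef, hldef] using this
  have hright : ∀ i, ‖m i - θ (x i.succ)‖ ≤ p i := fun i => by
    have := mean_near θ _ _ (p i) (θ (x i.succ)) (hlt i) (hθi i)
      (fun s hs => by rw [norm_sub_rev]; exact hsubint i _ _ hs.1.le hs.2 le_rfl)
    simpa only [hmdef, hldef] using this
  have hcyc := cyc_node x θ (by rw [hlast, h0, ← hper 0, zero_add])
  have hdiff : ∀ i, ‖m (i + 1) - m i‖ ^ 2 / l i ≤ 2 * R * E (i + 1) + 2 * E i := fun i => by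
    have h1 : ‖m (i + 1) - m i‖ ≤ p (i + 1) + p i := by
      have e : m (i + 1) - m i = (m (i + 1) - θ (x (i + 1).castSucc)) - (m i - θ (x i.succ)) := by
        rw [hcyc i]; ring
      rw [e]
      exact (norm_sub_le _ _).trans (add_le_add (hleft _) (hright _))
    have h2 : ‖m (i + 1) - m i‖ ^ 2 ≤ (p (i + 1) + p i) ^ 2 :=
      pow_le_pow_left₀ (norm_nonneg _) h1 2
    rw [div_le_iff₀ (hl i)]
    have h3 := hpE i
    have h4 := hpE (i + 1)
    have h5 : l (i + 1) * E (i + 1) ≤ R * l i * E (i + 1) :=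
      mul_le_mul_of_nonneg_right (hR i) (hE0 _)
    nlinarith [sq_nonneg (p (i + 1) - p i)]
  have hQm : Qd l m ≤ 1 + 2 * (R + 1) := by
    have h1 : Qd l m ≤ ∑ i, (F i + (2 * R * E (i + 1) + 2 * E i)) :=
      Finset.sum_le_sum fun i _ => add_le_add (hmF i) (hdiff i)
    rw [Finset.sum_add_distrib, Finset.sum_add_distrib, ← Finset.mul_sum, ← Finset.mul_sum,
      sum_shift E] at h1
    have h2 : 0 ≤ ∑ i, E i := Finset.sum_nonneg fun i _ => hE0 i
    have h3 : 0 ≤ ∑ i, F i := Finset.sum_nonneg fun i _ => hF0 i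
    nlinarith
  have hkey : ∑ i : Fin N, Aop l d i * ∫ s in (x i.castSucc)..(x i.succ), (starRingEnd ℂ) (θ s)
      = ∑ i, Aop l d i * ((l i : ℂ) * (starRingEnd ℂ) (m i)) := by
    refine Finset.sum_congr rfl (fun i _ => ?_)
    congr 1
    have hne : (l i : ℂ) ≠ 0 := by exact_mod_cast (hl i).ne'
    rw [intervalIntegral.integral_of_le (hlt i).le, integral_conj,
      ← intervalIntegral.integral_of_le (hlt i).le]
    simp only [hmdef, map_div₀, Complex.conj_ofReal]
    field_simp
  rw [hkey]
  exact (form_cs l hl d m).trans (mul_le_mul_of_nonneg_left hQm (Qd_nonneg l hl d))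

lemma cont_memLp (f : ℝ → ℂ) (hf : Continuous f) (a b : ℝ) :
    MemLp f 2 (volume.restrict (Set.Ioc a b)) := by
  obtain ⟨B, hB⟩ := (isCompact_Icc (a := a) (b := b)).exists_bound_of_continuousOn hf.continuousOn
  refine MemLp.of_bound hf.aestronglyMeasurable B ?_
  refine (ae_restrict_iff' measurableSet_Ioc).2 (Filter.Eventually.of_forall fun s hs => ?_)
  exact hB s (Set.Ioc_subset_Icc_self hs)

/-- derivative and antiderivative of the local shape function -/
lemma shape_int1 (δ : ℂ) (a l v : ℝ) (hl : 0 < l) :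
    ∫ s in a..v, δ * (((6 * ((s - a) / l) - 2) / l : ℝ) : ℂ) =
      δ * ((3 * ((v - a) / l) ^ 2 - 2 * ((v - a) / l) : ℝ) : ℂ) := by
  have hd : ∀ s ∈ Set.uIcc a v, HasDerivAt
      (fun s : ℝ => δ * ((3 * ((s - a) / l) ^ 2 - 2 * ((s - a) / l) : ℝ) : ℂ))
      (δ * (((6 * ((s - a) / l) - 2) / l : ℝ) : ℂ)) s := by
    intro s _
    have h1 : HasDerivAt (fun s : ℝ => (s - a) / l) (1 / l) s :=
      ((hasDerivAt_id s).sub_const a).div_const l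
    have h2 := ((h1.pow 2).const_mul 3).sub (h1.const_mul 2)
    refine (HasDerivAt.ofReal_comp (f := fun s : ℝ => 3 * ((s - a) / l) ^ 2 - 2 * ((s - a) / l))
      (h2.congr_deriv ?_)).const_mul δ
    simp
    field_simp
    ring
  rw [intervalIntegral.integral_eq_sub_of_hasDerivAt hd
    (Continuous.intervalIntegrable (by fun_prop) _ _)]
  simp

lemma shape_int2 (z δ : ℂ) (a b : ℝ) (hab : a < b) :
    ∫ s in a..b, (z + δ * ((3 * ((s - a) / (b - a)) ^ 2 - 2 * ((s - a) / (b - a)) : ℝ) : ℂ)) =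
      ((b - a : ℝ) : ℂ) * z := by
  have hl : b - a ≠ 0 := (sub_pos.2 hab).ne'
  have hd : ∀ s ∈ Set.uIcc a b, HasDerivAt
      (fun s : ℝ => z * ((s : ℝ) : ℂ) +
        δ * (((b - a) * (((s - a) / (b - a)) ^ 3 - ((s - a) / (b - a)) ^ 2) : ℝ) : ℂ))
      (z + δ * ((3 * ((s - a) / (b - a)) ^ 2 - 2 * ((s - a) / (b - a)) : ℝ) : ℂ)) s := by
    intro s _
    have h1 : HasDerivAt (fun s : ℝ => (s - a) / (b - a)) (1 / (b - a)) s :=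
      ((hasDerivAt_id s).sub_const a).div_const (b - a)
    have h2 := ((h1.pow 3).sub (h1.pow 2)).const_mul (b - a)
    have h3 : HasDerivAt (fun s : ℝ => z * ((s : ℝ) : ℂ)) z s := by
      simpa using (HasDerivAt.ofReal_comp (hasDerivAt_id s)).const_mul z
    refine h3.add ((HasDerivAt.ofReal_comp
      (f := fun s : ℝ => (b - a) * (((s - a) / (b - a)) ^ 3 - ((s - a) / (b - a)) ^ 2))
      (h2.congr_deriv ?_)).const_mul δ)
    simp
    field_simp
  rw [intervalIntegral.integral_eq_sub_of_hasDerivAt hd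
    (Continuous.intervalIntegrable (by fun_prop) _ _)]
  simp [div_self hl]
  ring

lemma build {L : ℝ} (hL : 0 < L) {N : ℕ} [NeZero N] (x : Fin (N + 1) → ℝ) (hx : StrictMono x)
    (h0 : x 0 = 0) (hlast : x (Fin.last N) = L)
    (l : Fin N → ℝ) (hldef : l = fun i => x i.succ - x i.castSucc) (d : Fin N → ℂ) :
    ∃ θ θ' : ℝ → ℂ,
      (∀ s, θ (s + L) = θ s) ∧
      (∀ a b : ℝ, a ≤ b → θ b = θ a + ∫ t in a..b, θ' t) ∧
      MemLp θ 2 (volume.restrict (Set.Ioo 0 L)) ∧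
      MemLp θ' 2 (volume.restrict (Set.Ioo 0 L)) ∧
      (∫ s in (0:ℝ)..L, (‖θ s‖ ^ 2 + ‖θ' s‖ ^ 2)) ≤ (2 * L ^ 2 + 18) * Qd l d ∧
      ∀ i : Fin N, ∫ s in (x i.castSucc)..(x i.succ), θ s = (l i : ℂ) * d i := by
  have hlt : ∀ i : Fin N, x i.castSucc < x i.succ := fun i => hx (Fin.castSucc_lt_succ)
  have hl : ∀ i, 0 < l i := fun i => by rw [hldef]; exact sub_pos.2 (hlt i)
  have hsub : ∀ i : Fin N, Set.Ioc (x i.castSucc) (x i.succ) ⊆ Set.Ioc 0 L := fun i =>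
    Set.Ioc_subset_Ioc (nodes_mem hx h0 hlast _).1 (nodes_mem hx h0 hlast _).2
  set δ : Fin N → ℂ := fun i => d (i + 1) - d i with hδ
  set G : Fin N → ℝ → ℂ := fun i s =>
    δ i * (((6 * ((s - x i.castSucc) / l i) - 2) / l i : ℝ) : ℂ) with hG
  have hGc : ∀ i, Continuous (G i) := fun i => by simp only [hG]; fun_prop
  set g : ℝ → ℂ := fun s => ∑ i, Set.indicator (Set.Ioc (x i.castSucc) (x i.succ)) (G i) s with hg
  have hgmem : MemLp g 2 (volume.restrict (Set.Ioc 0 L)) :=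
    memLp_finsetSum _ fun i _ => (cont_memLp (G i) (hGc i) 0 L).indicator measurableSet_Ioc
  have hgi : ∀ i : Fin N, ∀ s ∈ Set.Ioc (x i.castSucc) (x i.succ), g s = G i s := by
    intro i s hs
    simp only [hg]
    rw [Finset.sum_eq_single i, Set.indicator_of_mem hs]
    · intro j _ hj
      refine Set.indicator_of_notMem (fun hs' => ?_) _
      rcases lt_or_gt_of_ne hj with h | h
      · have : x j.succ ≤ x i.castSucc := hx.monotone (by
          rw [Fin.le_def]; simp only [Fin.val_succ, Fin.val_castSucc]; exact h)
        linarith [hs'.2, hs.1]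
      · have : x i.succ ≤ x j.castSucc := hx.monotone (by
          rw [Fin.le_def]; simp only [Fin.val_succ, Fin.val_castSucc]; exact h)
        linarith [hs.2, hs'.1]
    · simp
  set θ' : ℝ → ℂ := fun s => g (toIocMod hL 0 s) with hθ'
  have hper' : Function.Periodic θ' L := fun s => by simp only [hθ', toIocMod_add_right]
  have hθg : ∀ s ∈ Set.Ioc 0 L, θ' s = g s := fun s hs => by
    simp only [hθ']
    rw [(toIocMod_eq_self hL).2 (by simpa using hs)]
  have hmem' : MemLp θ' 2 (volume.restrict (Set.Ioc 0 L)) := by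
    refine (memLp_congr_ae ?_).1 hgmem
    exact (ae_restrict_iff' measurableSet_Ioc).2
      (Filter.Eventually.of_forall fun s hs => (hθg s hs).symm)
  have hint : ∀ a b, IntervalIntegrable θ' volume a b := by
    refine hper'.intervalIntegrable₀ hL.ne' ?_
    rw [intervalIntegrable_iff_integrableOn_Ioc_of_le hL.le]
    exact hmem'.integrable (by norm_num)
  have hθG : ∀ i : Fin N, ∀ s ∈ Set.Ioc (x i.castSucc) (x i.succ), θ' s = G i s := fun i s hs => by
    rw [hθg s (hsub i hs), hgi i s hs]
  have hpiece : ∀ i : Fin N, ∀ v, x i.castSucc ≤ v → v ≤ x i.succ →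
      ∫ s in (x i.castSucc)..v, θ' s =
      δ i * ((3 * ((v - x i.castSucc) / l i) ^ 2 - 2 * ((v - x i.castSucc) / l i) : ℝ) : ℂ) := by
    intro i v h1 h2
    rw [← shape_int1 (δ i) (x i.castSucc) (l i) v (hl i)]
    refine intervalIntegral.integral_congr_ae (Filter.Eventually.of_forall fun s hs => ?_)
    rw [Set.uIoc_of_le h1] at hs
    exact hθG i s ⟨hs.1, hs.2.trans h2⟩
  have hfull : ∀ i : Fin N, ∫ s in (x i.castSucc)..(x i.succ), θ' s = δ i := fun i => by
    rw [hpiece i _ (hlt i).le le_rfl]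
    have : (x i.succ - x i.castSucc) / l i = 1 := by
      have := (hl i).ne'
      rw [hldef] at this ⊢; exact div_self this
    rw [this]; norm_num
  have htot : ∫ s in (0:ℝ)..L, θ' s = 0 := by
    have := (sum_adj θ' N x (fun i => hint _ _)).2
    rw [h0, hlast] at this
    rw [← this, Finset.sum_congr rfl (fun i _ => hfull i)]
    simp only [hδ]
    rw [Finset.sum_sub_distrib, sum_shift d, sub_self]
  set θ : ℝ → ℂ := fun s => d 0 + ∫ t in (0:ℝ)..s, θ' t with hθ
  have hac : ∀ a b : ℝ, θ b = θ a + ∫ t in a..b, θ' t := fun a b => by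
    simp only [hθ]
    rw [add_assoc, intervalIntegral.integral_add_adjacent_intervals (hint _ _) (hint _ _)]
  have hper : ∀ s, θ (s + L) = θ s := fun s => by
    rw [hac s (s + L), hper'.intervalIntegral_add_eq s 0, zero_add, htot, add_zero]
  have hcont : Continuous θ :=
    continuous_const.add (intervalIntegral.continuous_primitive hint 0)
  have hnode' : ∀ k (hk : k < N), θ (x (⟨k, hk⟩ : Fin N).castSucc) = d ⟨k, hk⟩ := by
    intro k
    induction k with
    | zero =>
      intro hk
      have e1 : x (⟨0, hk⟩ : Fin N).castSucc = 0 := by rw [← h0]; rfl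
      rw [e1]
      simp only [hθ, intervalIntegral.integral_same, add_zero]
      rfl
    | succ k ih =>
      intro hk
      have hk' : k < N := by omega
      have e1 : x (⟨k + 1, hk⟩ : Fin N).castSucc = x (⟨k, hk'⟩ : Fin N).succ := rfl
      have e2 : (⟨k, hk'⟩ : Fin N) + 1 = ⟨k + 1, hk⟩ := by
        ext
        rw [Fin.val_add_one_of_lt']
        exact hk
      rw [e1, hac (x (⟨k, hk'⟩ : Fin N).castSucc), hfull, ih hk', hδ]
      simp only [e2]
      ring
  have hnode : ∀ i : Fin N, θ (x i.castSucc) = d i := fun i => hnode' i.1 i.2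
  have hθpiece : ∀ i : Fin N, ∀ v, x i.castSucc ≤ v → v ≤ x i.succ → θ v = d i +
      δ i * ((3 * ((v - x i.castSucc) / l i) ^ 2 - 2 * ((v - x i.castSucc) / l i) : ℝ) : ℂ) := by
    intro i v h1 h2
    rw [hac (x i.castSucc), hnode, hpiece i v h1 h2]
  have hmem : MemLp θ 2 (volume.restrict (Set.Ioc 0 L)) := cont_memLp θ hcont 0 L
  refine ⟨θ, θ', hper, fun a b _ => hac a b, ?_, ?_, ?_, ?_⟩
  · rwa [restrict_Ioo_eq_restrict_Ioc]
  · rwa [restrict_Ioo_eq_restrict_Ioc]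
  · have hii : IntervalIntegrable (fun s => ‖θ s‖ ^ 2 + ‖θ' s‖ ^ 2) volume 0 L := by
      rw [intervalIntegrable_iff_integrableOn_Ioc_of_le hL.le]
      exact hmem.norm.integrable_sq.add hmem'.norm.integrable_sq
    have hiii : ∀ i : Fin N, IntervalIntegrable (fun s => ‖θ s‖ ^ 2 + ‖θ' s‖ ^ 2) volume
        (x i.castSucc) (x i.succ) := fun i => by
      rw [intervalIntegrable_iff_integrableOn_Ioc_of_le (hlt i).le]
      rw [intervalIntegrable_iff_integrableOn_Ioc_of_le hL.le] at hii
      exact hii.mono_set (hsub i)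
    have hsum := (sum_adj _ N x hiii).2
    rw [h0, hlast] at hsum
    rw [← hsum, Qd, Finset.mul_sum]
    refine Finset.sum_le_sum fun i _ => ?_
    have hli := hl i
    have hlL : l i ≤ L := by
      have h1 := (nodes_mem hx h0 hlast i.castSucc).1
      have h2 := (nodes_mem hx h0 hlast i.succ).2
      rw [hldef]; simp only; linarith
    have hb : ∀ s ∈ Set.uIoc (x i.castSucc) (x i.succ), ‖‖θ s‖ ^ 2 + ‖θ' s‖ ^ 2‖ ≤
        2 * ‖d i‖ ^ 2 + 2 * ‖δ i‖ ^ 2 + 16 * ‖δ i‖ ^ 2 / l i ^ 2 := by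
      intro s hs
      rw [Set.uIoc_of_le (hlt i).le] at hs
      rw [Real.norm_of_nonneg (by positivity), hθpiece i s hs.1.le hs.2, hθG i s hs]
      set u := (s - x i.castSucc) / l i with hu
      have hu0 : 0 ≤ u := div_nonneg (by linarith [hs.1]) hli.le
      have hu1 : u ≤ 1 := by
        rw [hu, div_le_one hli, hldef]; simp only; linarith [hs.2]
      have a1 : |3 * u ^ 2 - 2 * u| ≤ 1 := by
        rw [abs_le]; constructor <;> nlinarith [sq_nonneg (u - 1)]
      have a2 : |6 * u - 2| ≤ 4 := by rw [abs_le]; constructor <;> linarith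
      have b1 : ‖d i + δ i * ((3 * u ^ 2 - 2 * u : ℝ) : ℂ)‖ ≤ ‖d i‖ + ‖δ i‖ := by
        refine (norm_add_le _ _).trans (add_le_add le_rfl ?_)
        rw [norm_mul, Complex.norm_real, Real.norm_eq_abs]
        exact mul_le_of_le_one_right (norm_nonneg _) a1
      have b2 : ‖G i s‖ ≤ ‖δ i‖ * (4 / l i) := by
        simp only [hG]
        rw [norm_mul, Complex.norm_real, Real.norm_eq_abs, abs_div, abs_of_pos hli]
        gcongr
      have c1 := pow_le_pow_left₀ (norm_nonneg _) b1 2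
      have c2 := pow_le_pow_left₀ (norm_nonneg _) b2 2
      have c3 : (‖δ i‖ * (4 / l i)) ^ 2 = 16 * ‖δ i‖ ^ 2 / l i ^ 2 := by ring
      rw [c3] at c2
      nlinarith [sq_nonneg (‖d i‖ - ‖δ i‖)]
    have h1 := (Real.le_norm_self _).trans (intervalIntegral.norm_integral_le_of_norm_le_const hb)
    refine h1.trans ?_
    have h2 : |x i.succ - x i.castSucc| = l i := by
      rw [abs_of_pos (sub_pos.2 (hlt i)), hldef]
    rw [h2]
    have h3 : (2 * ‖d i‖ ^ 2 + 2 * ‖δ i‖ ^ 2 + 16 * ‖δ i‖ ^ 2 / l i ^ 2) * l i =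
        2 * (l i * ‖d i‖ ^ 2) + (2 * l i ^ 2 + 16) * (‖δ i‖ ^ 2 / l i) := by
      field_simp
      ring
    rw [h3, mul_add]
    have h4 : l i ^ 2 ≤ L ^ 2 := pow_le_pow_left₀ hli.le hlL 2
    refine add_le_add (mul_le_mul_of_nonneg_right ?_ (by positivity))
      (mul_le_mul_of_nonneg_right ?_ (by positivity))
    · nlinarith [sq_nonneg L]
    · linarith
  · intro i
    have h1 := shape_int2 (d i) (δ i) (x i.castSucc) (x i.succ) (hlt i)
    rw [hldef]
    simp only
    rw [← h1]
    refine intervalIntegral.integral_congr_ae (Filter.Eventually.of_forall fun s hs => ?_)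
    rw [Set.uIoc_of_le (hlt i).le] at hs
    rw [hθpiece i s hs.1.le hs.2, hldef]

/-- There exist constants `c, C > 0` depending only on `L` and the
quasi-uniformity constants `C₁, C₂` (independent of `N` and `h`) such that for every
quasi-uniform partition of `Γ` and every piecewise constant `σ ∈ M` (values `cv`),
`c ‖σ‖²_{H^{−1}(Γ)} ≤ (A^{−1} σ, σ)_Γ ≤ C ‖σ‖²_{H^{−1}(Γ)}`, where `A^{−1}σ` is the
(well-defined) element `d ∈ M` with `Ad = σ`, and `‖σ‖_{H^{−1}(Γ)}` is the least upper
bound `nrm` of `Hm1Set`. -/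
theorem stmt_10 (L C₁ C₂ : ℝ) (hL : 0 < L) (hC₁ : 0 < C₁) (hC₂ : 0 < C₂) :
    ∃ c > 0, ∃ C > 0, ∀ (N : ℕ) [NeZero N], 2 ≤ N →
      ∀ (x : Fin (N + 1) → ℝ), StrictMono x → x 0 = 0 → x (Fin.last N) = L →
      ∀ h : ℝ, IsGreatest (Set.range fun i : Fin N => x i.succ - x i.castSucc) h →
      (∀ i : Fin N, C₁ * h ≤ x i.succ - x i.castSucc ∧ x i.succ - x i.castSucc ≤ C₂ * h) →
      ∀ (cv : Fin N → ℂ) (nrm : ℝ), IsLUB (Hm1Set L x cv) nrm →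
      ∀ d : Fin N → ℂ, Aop (fun i => x i.succ - x i.castSucc) d = cv →
        ((c * nrm ^ 2 : ℝ) : ℂ) ≤ ipGamma (fun i => x i.succ - x i.castSucc) d cv ∧
        ipGamma (fun i => x i.succ - x i.castSucc) d cv ≤ ((C * nrm ^ 2 : ℝ) : ℂ) := by
  set R : ℝ := C₂ / C₁ with hRdef
  have hR0 : 0 < R := div_pos hC₂ hC₁
  have hK : 0 < 1 + 2 * (R + 1) := by positivity
  refine ⟨(1 + 2 * (R + 1))⁻¹, inv_pos.2 hK, 2 * L ^ 2 + 18, by positivity, ?_⟩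
  intro N _ hN x hx h0 hlast h hh hq cv nrm hnrm d hd
  obtain ⟨l, hldef⟩ : ∃ l : Fin N → ℝ, l = fun i => x i.succ - x i.castSucc := ⟨_, rfl⟩
  have hl : ∀ i, 0 < l i := fun i => by
    rw [hldef]; exact sub_pos.2 (hx Fin.castSucc_lt_succ)
  rw [← hldef] at hd ⊢
  subst hd
  rw [ip_eq l hl d]
  have hQ := Qd_nonneg l hl d
  have hR : ∀ i, l (i + 1) ≤ R * l i := fun i => by
    have h1 := (hq (i + 1)).2
    have h2 := (hq i).1
    have h3 : l (i + 1) ≤ C₂ * h := by rw [hldef]; exact h1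
    have h4 : C₁ * h ≤ l i := by rw [hldef]; exact h2
    have h5 : R * (C₁ * h) = C₂ * h := by rw [hRdef]; field_simp
    rw [← h5] at h3
    exact h3.trans (mul_le_mul_of_nonneg_left h4 hR0.le)
  have hpos : ∀ r ∈ Hm1Set L x (Aop l d), 0 ≤ r := by
    rintro r ⟨_, _, _, _, _, _, _, rfl⟩
    exact norm_nonneg _
  constructor
  · rw [Complex.real_le_real]
    rw [inv_mul_le_iff₀ hK, mul_comm]
    have hle : nrm ≤ √(Qd l d * (1 + 2 * (R + 1))) := by
      refine hnrm.2 fun r hr => ?_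
      exact Real.le_sqrt_of_sq_le (bound_set x hx h0 hlast R hR0.le l hldef hR d r hr)
    have h0n : 0 ≤ nrm := by
      refine le_trans (hpos 0 ?_) (hnrm.1 ?_) <;>
      exact ⟨fun _ => 0, fun _ => 0, by simp, by simp, by simp, by simp, by simp, by simp⟩
    exact (Real.le_sqrt h0n (by positivity)).1 hle
  · rw [Complex.real_le_real]
    set K : ℝ := 2 * L ^ 2 + 18 with hKdef
    have hK0 : 0 < K := by positivity
    rcases hQ.eq_or_lt with hz | hz
    · rw [← hz]; positivity
    set k : ℝ := (√(K * Qd l d))⁻¹ with hk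
    have hKQ : 0 < K * Qd l d := mul_pos hK0 hz
    have hs : 0 < √(K * Qd l d) := Real.sqrt_pos.2 hKQ
    have hk2 : k ^ 2 * (K * Qd l d) = 1 := by
      rw [hk, inv_pow, Real.sq_sqrt hKQ.le, inv_mul_cancel₀ hKQ.ne']
    have hk0 : 0 < k := inv_pos.2 hs
    obtain ⟨θ, θ', e1, e2, e3, e4, e5, e6⟩ :=
      build hL x hx h0 hlast l hldef (fun i => (k : ℂ) * d i)
    rw [Qd_smul] at e5
    have hmemb : k * Qd l d ∈ Hm1Set L x (Aop l d) := by
      refine ⟨θ, θ', e1, e2, e3, e4, e5.trans (by rw [← hk2]; exact le_of_eq (by ring)), ?_⟩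
      have : ∑ i : Fin N, Aop l d i * ∫ s in (x i.castSucc)..(x i.succ), (starRingEnd ℂ) (θ s)
          = (k : ℂ) * ∑ i, Aop l d i * ((l i : ℂ) * (starRingEnd ℂ) (d i)) := by
        rw [Finset.mul_sum]
        refine Finset.sum_congr rfl (fun i _ => ?_)
        have hle : x i.castSucc ≤ x i.succ := (hx Fin.castSucc_lt_succ).le
        rw [intervalIntegral.integral_of_le hle, integral_conj,
          ← intervalIntegral.integral_of_le hle, e6 i]
        simp only [map_mul, Complex.conj_ofReal]
        ring
      rw [this, form_self l hl d, ← Complex.ofReal_mul, Complex.norm_real, Real.norm_eq_abs,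
        abs_of_nonneg (by positivity)]
    have hle := hnrm.1 hmemb
    have h2 := pow_le_pow_left₀ (by positivity) hle 2
    have h3 : K * (k * Qd l d) ^ 2 = Qd l d := by
      calc K * (k * Qd l d) ^ 2 = (k ^ 2 * (K * Qd l d)) * Qd l d := by ring
        _ = Qd l d := by rw [hk2, one_mul]
    rw [← h3]
    exact mul_le_mul_of_nonneg_left h2 hK0.le
end

section
/- There is a constant C > 0 depending only on L and the quasi-uniformity constants C₁, C₂ such that for every quasi-uniform partition of Γ and every piecewise constant σ ∈ M, ‖σ‖_{L²(0,L)} ≤ C h^{−1} ‖σ‖_{H^{−1}(Γ)}, where h = max_i l_i. -/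
open MeasureTheory

open Set

lemma aux_int1 (a b t : ℝ) (d : ℂ) :
    ∫ s in a..t, d * ((a + b - 2 * s : ℝ) : ℂ) = d * (((t - a) * (b - t) : ℝ) : ℂ) := by
  rw [intervalIntegral.integral_const_mul, intervalIntegral.integral_ofReal]
  congr 2
  have := intervalIntegral.integral_eq_sub_of_hasDerivAt (a := a) (b := t)
    (f := fun s => (s - a) * (b - s)) (f' := fun s => a + b - 2 * s) (fun s _ => by
      have := ((hasDerivAt_id s).sub_const a).mul ((hasDerivAt_id s).const_sub b)
      refine this.congr_deriv ?_
      simp; ring) (Continuous.intervalIntegrable (by fun_prop) _ _)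
  rw [this]; ring

lemma aux_int2 (a b : ℝ) (d : ℂ) :
    ∫ s in a..b, d * (((s - a) * (b - s) : ℝ) : ℂ) = d * (((b - a) ^ 3 / 6 : ℝ) : ℂ) := by
  rw [intervalIntegral.integral_const_mul, intervalIntegral.integral_ofReal]
  congr 2
  have := intervalIntegral.integral_eq_sub_of_hasDerivAt (a := a) (b := b)
    (f := fun s => (b - a) * (s - a) ^ 2 / 2 - (s - a) ^ 3 / 3)
    (f' := fun s => (s - a) * (b - s)) (fun s _ => by
      have h1 := (hasDerivAt_id s).sub_const a
      have := (((h1.pow 2).const_mul (b - a)).div_const 2).sub ((h1.pow 3).div_const 3)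
      refine this.congr_deriv ?_
      simp; ring) (Continuous.intervalIntegrable (by fun_prop) _ _)
  rw [this]; ring

lemma aux_sum {N : ℕ} (x : Fin (N + 1) → ℝ) (F : ℝ → ℝ)
    (hF : ∀ a b, (x 0 ≤ a ∧ a ≤ x (Fin.last N)) → (x 0 ≤ b ∧ b ≤ x (Fin.last N)) →
      IntervalIntegrable F volume a b) (hx : StrictMono x) :
    ∫ s in (x 0)..(x (Fin.last N)), F s
      = ∑ i : Fin N, ∫ s in (x i.castSucc)..(x i.succ), F s := by
  have hm : ∀ i, x 0 ≤ x i ∧ x i ≤ x (Fin.last N) := fun i =>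
    ⟨hx.monotone (Fin.zero_le i), hx.monotone (Fin.le_last i)⟩
  have h1 : ∀ i : Fin N, ∫ s in (x i.castSucc)..(x i.succ), F s
      = (∫ s in (x 0)..(x i.succ), F s) - ∫ s in (x 0)..(x i.castSucc), F s := fun i =>
    (intervalIntegral.integral_interval_sub_left (hF _ _ (hm 0) (hm _))
      (hF _ _ (hm 0) (hm _))).symm
  rw [Finset.sum_congr rfl (fun i _ => h1 i), Finset.sum_sub_distrib]
  have h2 := Fin.sum_univ_succ (fun j => ∫ s in (x 0)..(x j), F s)
  have h3 := Fin.sum_univ_castSucc (fun j => ∫ s in (x 0)..(x j), F s)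
  simp only [intervalIntegral.integral_same] at h2
  linarith

/-- existence of the bubble test function -/
lemma aux_bubble (L : ℝ) (hL : 0 < L) {N : ℕ} (x : Fin (N + 1) → ℝ) (hx : StrictMono x)
    (h0 : x 0 = 0) (hl : x (Fin.last N) = L) (d : Fin N → ℂ) :
    ∃ θ θ' : ℝ → ℂ, (∀ s, θ (s + L) = θ s) ∧
      (∀ a b : ℝ, a ≤ b → θ b = θ a + ∫ t in a..b, θ' t) ∧
      Continuous θ ∧ Measurable θ' ∧ (∃ B : ℝ, ∀ s, ‖θ' s‖ ≤ B) ∧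
      (∀ i : Fin N, ∀ s ∈ Ico (x i.castSucc) (x i.succ),
        θ' s = d i * ((x i.castSucc + x i.succ - 2 * s : ℝ) : ℂ)) ∧
      (∀ i : Fin N, ∀ s ∈ Icc (x i.castSucc) (x i.succ),
        θ s = d i * (((s - x i.castSucc) * (x i.succ - s) : ℝ) : ℂ)) := by
  have hm : ∀ i, 0 ≤ x i ∧ x i ≤ L := fun i =>
    ⟨h0 ▸ hx.monotone (Fin.zero_le i), hl ▸ hx.monotone (Fin.le_last i)⟩
  let g : ℝ → ℂ := fun s => ∑ i : Fin N, (Ico (x i.castSucc) (x i.succ)).indicator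
    (fun s => d i * ((x i.castSucc + x i.succ - 2 * s : ℝ) : ℂ)) s
  let θ' : ℝ → ℂ := fun s => g (L * Int.fract (s / L))
  have hgm : Measurable g := by
    refine Finset.measurable_sum _ fun i _ => ?_
    refine Measurable.indicator ?_ measurableSet_Ico
    exact Continuous.measurable (by fun_prop)
  have hθm : Measurable θ' := by
    refine hgm.comp ?_
    exact (measurable_fract.comp (measurable_id.div_const L)).const_mul L
  have hgb : ∀ s, ‖g s‖ ≤ ∑ i : Fin N, ‖d i‖ * (x i.succ - x i.castSucc) := by
    intro s
    refine (norm_sum_le _ _).trans (Finset.sum_le_sum fun i _ => ?_)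
    have hlt : x i.castSucc < x i.succ := hx (Fin.castSucc_lt_succ)
    by_cases hs : s ∈ Ico (x i.castSucc) (x i.succ)
    · rw [indicator_of_mem hs, norm_mul, Complex.norm_real, Real.norm_eq_abs]
      refine mul_le_mul_of_nonneg_left ?_ (norm_nonneg _)
      rw [abs_le]; constructor <;> linarith [hs.1, hs.2]
    · rw [indicator_of_notMem hs, norm_zero]
      exact mul_nonneg (norm_nonneg _) (by linarith)
  have hθb : ∀ s, ‖θ' s‖ ≤ ∑ i : Fin N, ‖d i‖ * (x i.succ - x i.castSucc) := fun s => hgb _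
  have hint : ∀ a b, IntervalIntegrable θ' volume a b := by
    intro a b
    refine (intervalIntegrable_const (c := ∑ i : Fin N, ‖d i‖ * (x i.succ - x i.castSucc))).mono_fun
      hθm.aestronglyMeasurable (Filter.Eventually.of_forall fun s => ?_)
    exact (hθb s).trans (le_abs_self _)
  have hloc : ∀ i : Fin N, ∀ s ∈ Ico (x i.castSucc) (x i.succ),
        θ' s = d i * ((x i.castSucc + x i.succ - 2 * s : ℝ) : ℂ) := by
    intro i s hs
    have hs0 : 0 ≤ s := (hm _).1.trans hs.1
    have hsL : s < L := hs.2.trans_le (hm _).2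
    have hfr : L * Int.fract (s / L) = s := by
      rw [Int.fract_eq_self.2 ⟨by positivity, (div_lt_one hL).2 hsL⟩]
      field_simp
    simp only [θ', hfr, g]
    rw [Finset.sum_eq_single i, indicator_of_mem hs]
    · intro j _ hj
      refine indicator_of_notMem ?_ _
      intro hsj
      rcases lt_or_gt_of_ne hj with hji | hji
      · have : x j.succ ≤ x i.castSucc := hx.monotone (by
          rw [Fin.le_def]; simp; omega)
        linarith [hs.1, hsj.2]
      · have : x i.succ ≤ x j.castSucc := hx.monotone (by
          rw [Fin.le_def]; simp; omega)
        linarith [hs.2, hsj.1]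
    · simp
  have hseg : ∀ i : Fin N, ∀ t ∈ Icc (x i.castSucc) (x i.succ),
      ∫ s in (x i.castSucc)..t, θ' s
        = d i * (((t - x i.castSucc) * (x i.succ - t) : ℝ) : ℂ) := by
    intro i t ht
    rw [← aux_int1]
    refine intervalIntegral.integral_congr_Ioo_of_le ht.1 fun s hs => ?_
    exact hloc i s ⟨hs.1.le, hs.2.trans_le ht.2⟩
  have hnode : ∀ j : Fin (N + 1), ∫ s in (0:ℝ)..(x j), θ' s = 0 := by
    intro j
    induction j using Fin.induction with
    | zero => simp [h0]
    | succ i ih =>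
      rw [← intervalIntegral.integral_add_adjacent_intervals (hint _ (x i.castSucc)) (hint _ _),
        ih, hseg i _ ⟨(hx Fin.castSucc_lt_succ).le, le_rfl⟩]
      simp
  have hper : Function.Periodic θ' L := by
    intro s
    simp only [θ']
    rw [add_div, div_self hL.ne', Int.fract_add_one]
  refine ⟨fun s => ∫ t in (0:ℝ)..s, θ' t, θ', ?_, ?_, ?_, hθm, ⟨_, hθb⟩, hloc, ?_⟩
  · intro s
    show ∫ t in (0:ℝ)..(s + L), θ' t = ∫ t in (0:ℝ)..s, θ' t
    rw [← intervalIntegral.integral_add_adjacent_intervals (hint _ s) (hint _ _),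
      hper.intervalIntegral_add_eq s 0, zero_add, ← hl, hnode, add_zero]
  · intro a b _
    exact (intervalIntegral.integral_add_adjacent_intervals (hint _ _) (hint _ _)).symm
  · exact intervalIntegral.continuous_primitive hint 0
  · intro i t ht
    show ∫ t in (0:ℝ)..t, θ' t = _
    rw [← intervalIntegral.integral_add_adjacent_intervals (hint _ (x i.castSucc)) (hint _ _),
        hnode, hseg i _ ht, zero_add]

/-- There is a constant `C > 0` depending only on `L` and the
quasi-uniformity constants `C₁, C₂` such that for every quasi-uniform partition of `Γ`
(`C₁ h ≤ l_i ≤ C₂ h`, `h = max_i l_i`) and every piecewise constant `σ ∈ M` (values `cv`),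
`‖σ‖_{L²(0,L)} ≤ C h⁻¹ ‖σ‖_{H^{−1}(Γ)}`, where `‖σ‖²_{L²(0,L)} = ∑ i, |cv_i|² l_i` and
`‖σ‖_{H^{−1}(Γ)}` is the least upper bound `nrm` of `Hm1Set`. -/
theorem stmt_11 (L C₁ C₂ : ℝ) (hL : 0 < L) (hC₁ : 0 < C₁) (hC₂ : 0 < C₂) :
    ∃ C > 0, ∀ (N : ℕ), 2 ≤ N →
      ∀ (x : Fin (N + 1) → ℝ), StrictMono x → x 0 = 0 → x (Fin.last N) = L →
      ∀ h : ℝ, IsGreatest (Set.range fun i : Fin N => x i.succ - x i.castSucc) h →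
      (∀ i : Fin N, C₁ * h ≤ x i.succ - x i.castSucc ∧ x i.succ - x i.castSucc ≤ C₂ * h) →
      ∀ (cv : Fin N → ℂ) (nrm : ℝ), IsLUB (Hm1Set L x cv) nrm →
        Real.sqrt (∑ i : Fin N, ‖cv i‖ ^ 2 * (x i.succ - x i.castSucc)) ≤ C / h * nrm := by
  refine ⟨6 * Real.sqrt (L ^ 2 + 1) / C₁ ^ 2, by positivity, ?_⟩
  intro N hN x hx h0 hl h hh hq cv nrm hnrm
  have hm : ∀ i, 0 ≤ x i ∧ x i ≤ L := fun i =>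
    ⟨h0 ▸ hx.monotone (Fin.zero_le i), hl ▸ hx.monotone (Fin.le_last i)⟩
  have hpos : ∀ i : Fin N, 0 < x i.succ - x i.castSucc := fun i =>
    sub_pos.2 (hx Fin.castSucc_lt_succ)
  have hle : ∀ i : Fin N, x i.succ - x i.castSucc ≤ h := fun i => hh.2 ⟨i, rfl⟩
  have hh0 : 0 < h := by
    obtain ⟨i, hi⟩ := hh.1
    simp only at hi
    rw [← hi]; exact hpos i
  set S : ℝ := ∑ i : Fin N, ‖cv i‖ ^ 2 * (x i.succ - x i.castSucc) with hS
  have hS0 : 0 ≤ S := Finset.sum_nonneg fun i _ => mul_nonneg (by positivity) (hpos i).le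
  set K : ℝ := L ^ 2 + 1 with hK
  have hK0 : 0 < K := by positivity
  set lam : ℝ := 1 / (h * Real.sqrt K * Real.sqrt S) with hlam
  have hlam0 : 0 ≤ lam := by positivity
  obtain ⟨θ, θ', hper, hftc, hcont, hmeas, ⟨B, hB⟩, hd, hv⟩ :=
    aux_bubble L hL x hx h0 hl (fun i => (lam : ℂ) * cv i)
  have hpt : ∀ i : Fin N, ∀ s ∈ Ioo (x i.castSucc) (x i.succ),
      ‖θ s‖ ^ 2 + ‖θ' s‖ ^ 2
        ≤ lam ^ 2 * ‖cv i‖ ^ 2 * (K * (x i.succ - x i.castSucc) ^ 2) := by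
    intro i s hs
    rw [hd i s ⟨hs.1.le, hs.2⟩, hv i s ⟨hs.1.le, hs.2.le⟩]
    simp only [norm_mul, Complex.norm_real, Real.norm_eq_abs, mul_pow, sq_abs]
    have e1 : (s - x i.castSucc) ^ 2 * (x i.succ - s) ^ 2
        ≤ (x i.succ - x i.castSucc) ^ 2 * L ^ 2 := by
      gcongr
      · linarith [hs.1]
      · linarith [hs.2]
      · linarith [hs.2]
      · linarith [hs.1, (hm i.castSucc).1, (hm i.succ).2]
    have e2 : (x i.castSucc + x i.succ - 2 * s) ^ 2 ≤ (x i.succ - x i.castSucc) ^ 2 := by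
      rw [sq_le_sq, abs_of_pos (hpos i), abs_le]
      constructor <;> linarith [hs.1, hs.2]
    rw [← mul_add]
    refine mul_le_mul_of_nonneg_left ?_ (by positivity)
    rw [hK]; nlinarith
  have hFi : ∀ a b, IntervalIntegrable (fun s => ‖θ s‖ ^ 2 + ‖θ' s‖ ^ 2) volume a b := by
    intro a b
    refine IntervalIntegrable.add (Continuous.intervalIntegrable (by fun_prop) _ _) ?_
    refine (intervalIntegrable_const (c := B ^ 2)).mono_fun
      (hmeas.norm.pow_const 2).aestronglyMeasurable (Filter.Eventually.of_forall fun s => ?_)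
    simp only [norm_pow, norm_norm]
    gcongr
    exact (hB s).trans (le_abs_self _)
  have hnorm : (∫ s in (0:ℝ)..L, (‖θ s‖ ^ 2 + ‖θ' s‖ ^ 2)) ≤ lam ^ 2 * (K * h ^ 2 * S) := by
    have := aux_sum x (fun s => ‖θ s‖ ^ 2 + ‖θ' s‖ ^ 2) (fun a b _ _ => hFi a b) hx
    rw [h0, hl] at this
    rw [this, hS, Finset.mul_sum, Finset.mul_sum]
    refine Finset.sum_le_sum fun i _ => ?_
    have h1 := intervalIntegral.integral_mono_on_of_le_Ioo (μ := volume)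
      (hx (Fin.castSucc_lt_succ (i := i))).le (hFi _ _) (intervalIntegrable_const) (hpt i)
    refine h1.trans ?_
    rw [intervalIntegral.integral_const, smul_eq_mul]
    have h2 : (x i.succ - x i.castSucc) ^ 2 ≤ h ^ 2 := by
      have := hpos i
      have := hle i
      gcongr
    have h3 : 0 ≤ lam ^ 2 * ‖cv i‖ ^ 2 * K * (x i.succ - x i.castSucc) :=
      mul_nonneg (by positivity) (hpos i).le
    nlinarith [mul_le_mul_of_nonneg_left h2 h3]
  have hone : lam ^ 2 * (K * h ^ 2 * S) ≤ 1 := by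
    have : lam ^ 2 = 1 / (K * h ^ 2 * S) := by
      rw [hlam, div_pow, mul_pow, mul_pow, Real.sq_sqrt hS0, Real.sq_sqrt hK0.le]
      congr 1 <;> ring
    rw [this, one_div]
    exact inv_mul_le_one
  have hpair : ∑ i : Fin N, cv i * ∫ s in (x i.castSucc)..(x i.succ), (starRingEnd ℂ) (θ s)
      = ((∑ i : Fin N, lam * ‖cv i‖ ^ 2 * ((x i.succ - x i.castSucc) ^ 3 / 6) : ℝ) : ℂ) := by
    rw [Complex.ofReal_sum]
    refine Finset.sum_congr rfl fun i _ => ?_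
    have : ∫ s in (x i.castSucc)..(x i.succ), (starRingEnd ℂ) (θ s)
        = ∫ s in (x i.castSucc)..(x i.succ), ((lam : ℂ) * (starRingEnd ℂ) (cv i)) *
          (((s - x i.castSucc) * (x i.succ - s) : ℝ) : ℂ) := by
      refine intervalIntegral.integral_congr_Ioo_of_le (hx Fin.castSucc_lt_succ).le fun s hs => ?_
      simp only [hv i s ⟨hs.1.le, hs.2.le⟩, map_mul, Complex.conj_ofReal]
    rw [this, aux_int2]
    have hc := Complex.mul_conj' (cv i)
    push_cast
    rw [← hc]
    ring
  have hmem : ‖∑ i : Fin N, cv i * ∫ s in (x i.castSucc)..(x i.succ), (starRingEnd ℂ) (θ s)‖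
      ∈ Hm1Set L x cv := by
    refine ⟨θ, θ', hper, hftc, ?_, ?_, hnorm.trans hone, rfl⟩
    · obtain ⟨M, hM⟩ := (isCompact_Icc (a := (0:ℝ)) (b := L)).exists_bound_of_continuousOn
        hcont.continuousOn
      refine MemLp.of_bound hcont.aestronglyMeasurable M ?_
      refine (ae_restrict_iff' measurableSet_Ioo).2 (Filter.Eventually.of_forall fun s hs => ?_)
      exact hM s ⟨hs.1.le, hs.2.le⟩
    · exact MemLp.of_bound hmeas.aestronglyMeasurable B (Filter.Eventually.of_forall hB)
  have hlow : lam * (C₁ ^ 2 * h ^ 2 / 6 * S) ≤ nrm := by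
    refine le_trans ?_ (hnrm.1 hmem)
    rw [hpair, Complex.norm_real]
    refine le_trans ?_ (le_abs_self _)
    rw [hS, Finset.mul_sum, Finset.mul_sum]
    refine Finset.sum_le_sum fun i _ => ?_
    have h2 : (C₁ * h) ^ 2 ≤ (x i.succ - x i.castSucc) ^ 2 := by
      have := (hq i).1
      gcongr
    have h3 : 0 ≤ lam * ‖cv i‖ ^ 2 * (x i.succ - x i.castSucc) / 6 :=
      div_nonneg (mul_nonneg (by positivity) (hpos i).le) (by norm_num)
    nlinarith [mul_le_mul_of_nonneg_left h2 h3]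
  have hsK : 0 < Real.sqrt K := Real.sqrt_pos.2 hK0
  have hfin : lam * (C₁ ^ 2 * h ^ 2 / 6 * S) = C₁ ^ 2 * h * Real.sqrt S / (6 * Real.sqrt K) := by
    rcases hS0.eq_or_lt with h | h'
    · rw [← h]; simp
    · have hsS : 0 < Real.sqrt S := Real.sqrt_pos.2 h'
      have : S = Real.sqrt S * Real.sqrt S := (Real.mul_self_sqrt hS0).symm
      rw [hlam]
      field_simp
      nlinarith
  rw [hfin] at hlow
  calc Real.sqrt S = 6 * Real.sqrt K / C₁ ^ 2 / h *
        (C₁ ^ 2 * h * Real.sqrt S / (6 * Real.sqrt K)) := by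
        field_simp
    _ ≤ _ := mul_le_mul_of_nonneg_left hlow (by positivity)
end
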